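/- Let 1/2 < H < 3/4 and define d_H = ∫_{[0,∞)³} e^{-x - |y-z|} z^{2H-2} |x-y|^{2H-2} dx dy dz. Then d_H = (2H - 1/2) Γ(2H-1)² + (4H-1) Γ(2H-1) Γ(3-4H) Γ(4H-2) / Γ(2-2H). -/

import Mathlib

open MeasureTheory Real Set

open ProbabilityTheory (beta beta_pos)

open scoped ENNReal

/-!
On each side of the diagonal of a quadrant, the distance `w` to the diagonal and the smaller
coordinate are coordinates on a quadrant again. Applied to `(x, y)`, this turns the triple integral
into the pairing of `w ^ (b - 1)` and `z ^ (a - 1)` against `κ (w - z)`, where the kernel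
`κ t = ∫₀^∞ e ^ (-x - |x + t|) dx` is explicit, plus a boundary term
`Γ b * ∫ z ^ (a - 1) κ (-z) dz`. Applied to `(w, z)`, it leaves the integrals of
`x ^ (b - 1) (x + u) ^ (a - 1)` and `x ^ (a - 1) (x + u) ^ (b - 1)` over `x`, which are beta values
times `u ^ (a + b - 1)`; what remains are gamma integrals.
-/

theorem setLIntegral_Ioi_zero_comp_add_right (f : ℝ → ℝ≥0∞) (s : ℝ) :
    ∫⁻ w in Ioi 0, f (w + s) = ∫⁻ x in Ioi s, f x := by
  have h := (measurePreserving_add_right volume s).setLIntegral_comp_preimage_emb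
    (measurableEmbedding_addRight s) f (Ioi s)
  rwa [preimage_add_const_Ioi, sub_self] at h

theorem lintegral_above_diagonal_Ioi {f : ℝ → ℝ → ℝ≥0∞}
    (hf : Measurable (Function.uncurry f)) (c : ℝ) :
    ∫⁻ x in Ioi c, ∫⁻ y in Ioi x, f x y = ∫⁻ w in Ioi 0, ∫⁻ x in Ioi c, f x (x + w) := by
  simp_rw [← setLIntegral_Ioi_zero_comp_add_right (f _)]
  rw [lintegral_lintegral_swap (by fun_prop)]
  simp_rw [add_comm]

theorem lintegral_Ioi_Ioc_swap {f : ℝ → ℝ → ℝ≥0∞}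
    (hf : Measurable (Function.uncurry f)) (c : ℝ) :
    ∫⁻ x in Ioi c, ∫⁻ y in Ioc c x, f x y = ∫⁻ y in Ioi c, ∫⁻ x in Ioi y, f x y := by
  have hmeas : MeasurableSet {p : ℝ × ℝ | p.2 ≤ p.1} :=
    measurableSet_le measurable_snd measurable_fst
  have hrow : ∀ x, ∫⁻ y in Ioc c x, f x y =
      ∫⁻ y in Ioi c, {p : ℝ × ℝ | p.2 ≤ p.1}.indicator (Function.uncurry f) (x, y) := fun x => by
    rw [← Ioi_inter_Iic, inter_comm, ← setLIntegral_indicator measurableSet_Iic]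
    rfl
  have hcol : ∀ y ∈ Ioi c, ∫⁻ x in Ioi y, f x y =
      ∫⁻ x in Ioi c, {p : ℝ × ℝ | p.2 ≤ p.1}.indicator (Function.uncurry f) (x, y) := fun y hy => by
    rw [restrict_Ioi_eq_restrict_Ici, ← inter_eq_left.2 (Ici_subset_Ioi.2 hy),
      ← setLIntegral_indicator measurableSet_Ici]
    rfl
  rw [setLIntegral_congr_fun measurableSet_Ioi hcol]
  simp_rw [hrow]
  exact lintegral_lintegral_swap (hf.indicator hmeas).aemeasurable

theorem lintegral_Ioi_Ioi_eq_add_diagonal {f : ℝ → ℝ → ℝ≥0∞}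
    (hf : Measurable (Function.uncurry f)) (c : ℝ) :
    ∫⁻ x in Ioi c, ∫⁻ y in Ioi c, f x y =
      (∫⁻ w in Ioi 0, ∫⁻ x in Ioi c, f x (x + w)) +
        ∫⁻ w in Ioi 0, ∫⁻ y in Ioi c, f (y + w) y := by
  have hsplit : ∀ x ∈ Ioi c, ∫⁻ y in Ioi c, f x y =
      (∫⁻ y in Ioc c x, f x y) + ∫⁻ y in Ioi x, f x y := fun x hx => by
    rw [← lintegral_union measurableSet_Ioi (Ioc_disjoint_Ioi le_rfl),
      Ioc_union_Ioi_eq_Ioi (mem_Ioi.1 hx).le]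
  have hmeas : Measurable fun x => ∫⁻ y in Ioi x, f x y := by
    simp_rw [← setLIntegral_Ioi_zero_comp_add_right (f _)]
    fun_prop
  rw [setLIntegral_congr_fun measurableSet_Ioi hsplit, lintegral_add_right _ hmeas, add_comm,
    lintegral_Ioi_Ioc_swap hf, lintegral_above_diagonal_Ioi hf,
    lintegral_above_diagonal_Ioi (f := fun y x => f x y) (by fun_prop)]

section

variable {a b : ℝ}

theorem lintegral_rpow_mul_exp_neg_mul_Ioi {r : ℝ} (ha : 0 < a) (hr : 0 < r) :
    ∫⁻ t in Ioi 0, ENNReal.ofReal (t ^ (a - 1)) * ENNReal.ofReal (exp (-(r * t))) =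
      ENNReal.ofReal (Gamma a) * ENNReal.ofReal (r ^ (-a)) := by
  have hGamma := integral_rpow_mul_exp_neg_mul_Ioi ha hr
  have hvalue : (1 / r) ^ a * Gamma a = Gamma a * r ^ (-a) := by
    rw [one_div, inv_rpow hr.le, rpow_neg hr.le, mul_comm]
  have hpos : 0 < Gamma a * r ^ (-a) := mul_pos (Gamma_pos_of_pos ha) (rpow_pos_of_pos hr _)
  rw [hvalue] at hGamma
  simp_rw [← ENNReal.ofReal_mul' (exp_nonneg _)]
  rw [← ENNReal.ofReal_mul (Gamma_pos_of_pos ha).le, ← hGamma, ofReal_integral_eq_lintegral_ofReal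
    (.of_integral_ne_zero (hGamma ▸ hpos.ne'))]
  filter_upwards [ae_restrict_mem measurableSet_Ioi] with t (ht : 0 < t)
  simp only [Pi.zero_apply]
  positivity

theorem lintegral_rpow_mul_exp_neg_Ioi (ha : 0 < a) :
    ∫⁻ t in Ioi 0, ENNReal.ofReal (t ^ (a - 1)) * ENNReal.ofReal (exp (-t)) =
      ENNReal.ofReal (Gamma a) := by
  simpa using lintegral_rpow_mul_exp_neg_mul_Ioi ha one_pos

theorem lintegral_rpow_mul_add_rpow_Ioi {w : ℝ} (ha : 0 < a) (hb : 0 < b) (hw : 0 < w) :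
    ∫⁻ x in Ioi 0, ENNReal.ofReal (x ^ (a - 1)) * ENNReal.ofReal ((x + w) ^ (-(a + b))) =
      ENNReal.ofReal (beta a b) * ENNReal.ofReal (w ^ (-b)) := by
  have hΓ : 0 < Gamma (a + b) := Gamma_pos_of_pos (add_pos ha hb)
  have hexp (x s : ℝ) : ENNReal.ofReal (exp (-((x + w) * s))) =
      ENNReal.ofReal (exp (-(w * s))) * ENNReal.ofReal (exp (-(s * x))) := by
    rw [← ENNReal.ofReal_mul (exp_nonneg _), ← exp_add]
    ring_nf
  have hpow : ∀ s ∈ Ioi (0 : ℝ), ENNReal.ofReal (s ^ (a + b - 1)) * ENNReal.ofReal (s ^ (-a)) =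
      ENNReal.ofReal (s ^ (b - 1)) := fun s hs => by
    rw [← ENNReal.ofReal_mul (rpow_nonneg (mem_Ioi.1 hs).le _), ← rpow_add hs]
    ring_nf
  -- `Γ (a + b) * (x + w) ^ (-(a + b))` is the Laplace transform of `s ^ (a + b - 1)` at `x + w`.
  refine (ENNReal.mul_right_inj (ENNReal.ofReal_pos.2 hΓ).ne' ENNReal.ofReal_ne_top).1 ?_
  calc
    _ = ∫⁻ x in Ioi 0, ∫⁻ s in Ioi 0, ENNReal.ofReal (s ^ (a + b - 1)) *
          ENNReal.ofReal (exp (-(w * s))) *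
          (ENNReal.ofReal (x ^ (a - 1)) * ENNReal.ofReal (exp (-(s * x)))) := by
      rw [← lintegral_const_mul _ (by fun_prop)]
      refine setLIntegral_congr_fun measurableSet_Ioi fun x (hx : 0 < x) => ?_
      rw [mul_left_comm, ← lintegral_rpow_mul_exp_neg_mul_Ioi (add_pos ha hb) (add_pos hx hw),
        ← lintegral_const_mul _ (by fun_prop)]
      simp_rw [hexp]
      congr 1 with s
      ring
    _ = ∫⁻ s in Ioi 0, ENNReal.ofReal (Gamma a) *
          (ENNReal.ofReal (s ^ (b - 1)) * ENNReal.ofReal (exp (-(w * s)))) := by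
      rw [lintegral_lintegral_swap (by fun_prop)]
      refine setLIntegral_congr_fun measurableSet_Ioi fun s hs => ?_
      rw [lintegral_const_mul _ (by fun_prop), lintegral_rpow_mul_exp_neg_mul_Ioi ha hs,
        ← hpow s hs]
      ring
    _ = ENNReal.ofReal (Gamma a * Gamma b) * ENNReal.ofReal (w ^ (-b)) := by
      rw [lintegral_const_mul _ (by fun_prop), lintegral_rpow_mul_exp_neg_mul_Ioi hb hw,
        ← mul_assoc, ENNReal.ofReal_mul (Gamma_pos_of_pos ha).le]
    _ = _ := by
      rw [← mul_assoc, ← ENNReal.ofReal_mul hΓ.le, beta, mul_div_cancel₀ _ hΓ.ne']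

theorem lintegral_rpow_mul_rpow_mul_sub {φ : ℝ → ℝ≥0∞} (hφ : Measurable φ)
    (ha : 0 < a) (hb : 0 < b) (hab : a + b < 1) :
    ∫⁻ x in Ioi 0, ∫⁻ y in Ioi 0,
        ENNReal.ofReal (x ^ (a - 1)) * ENNReal.ofReal (y ^ (b - 1)) * φ (y - x) =
      ENNReal.ofReal (beta a (1 - a - b)) *
          (∫⁻ w in Ioi 0, ENNReal.ofReal (w ^ (a + b - 1)) * φ w) +
        ENNReal.ofReal (beta b (1 - a - b)) *
          ∫⁻ w in Ioi 0, ENNReal.ofReal (w ^ (a + b - 1)) * φ (-w) := by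
  have hside {p q : ℝ} (hp : 0 < p) (hpq : p + q = a + b) {ψ : ℝ → ℝ≥0∞} (hψ : Measurable ψ) :
      ∫⁻ w in Ioi 0, ∫⁻ x in Ioi 0,
          ENNReal.ofReal (x ^ (p - 1)) * ENNReal.ofReal ((x + w) ^ (q - 1)) * ψ w =
        ENNReal.ofReal (beta p (1 - a - b)) *
          ∫⁻ w in Ioi 0, ENNReal.ofReal (w ^ (a + b - 1)) * ψ w := by
    rw [← lintegral_const_mul _ (by fun_prop)]
    refine setLIntegral_congr_fun measurableSet_Ioi fun w hw => ?_
    have hbeta := lintegral_rpow_mul_add_rpow_Ioi hp (b := 1 - a - b) (by linarith) hw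
    rw [show -(p + (1 - a - b)) = q - 1 by linarith,
      show -(1 - a - b) = a + b - 1 by ring] at hbeta
    rw [lintegral_mul_const _ (by fun_prop), hbeta, mul_assoc]
  rw [lintegral_Ioi_Ioi_eq_add_diagonal (by fun_prop), ← hside ha rfl hφ,
    ← hside hb (add_comm b a) (ψ := fun w => φ (-w)) (by fun_prop)]
  simp_rw [add_sub_cancel_left, sub_add_cancel_left,
    mul_comm (ENNReal.ofReal (_ ^ (b - 1))) (ENNReal.ofReal ((_ + _) ^ (a - 1)))]

/-- The kernel `κ t = ∫₀^∞ e ^ (-x - |x + t|) dx`, to which the exponential factors of the triple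
integral collapse once `x` is integrated out with `y - x` and `z` fixed. It is `ℝ≥0∞`-valued so that
Tonelli's theorem applies without integrability conditions. -/
noncomputable def expKernel (t : ℝ) : ℝ≥0∞ :=
  ∫⁻ x in Ioi 0, ENNReal.ofReal (exp (-x)) * ENNReal.ofReal (exp (-|x + t|))

@[fun_prop]
theorem measurable_expKernel : Measurable expKernel := by
  unfold expKernel
  fun_prop

theorem expKernel_of_nonneg {t : ℝ} (ht : 0 ≤ t) :
    expKernel t = ENNReal.ofReal (1 / 2) * ENNReal.ofReal (exp (-t)) := by
  have hexp : ∀ x ∈ Ioi (0 : ℝ), ENNReal.ofReal (exp (-x)) * ENNReal.ofReal (exp (-|x + t|)) =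
      ENNReal.ofReal (x ^ ((1 : ℝ) - 1)) * ENNReal.ofReal (exp (-(2 * x))) *
        ENNReal.ofReal (exp (-t)) := fun x hx => by
      rw [abs_of_nonneg (add_nonneg (mem_Ioi.1 hx).le ht), sub_self, rpow_zero, ENNReal.ofReal_one,
        one_mul, ← ENNReal.ofReal_mul (exp_nonneg _), ← ENNReal.ofReal_mul (exp_nonneg _),
        ← exp_add, ← exp_add]
      ring_nf
  rw [expKernel, setLIntegral_congr_fun measurableSet_Ioi hexp, lintegral_mul_const _ (by fun_prop),
    lintegral_rpow_mul_exp_neg_mul_Ioi one_pos two_pos, Gamma_one, rpow_neg_one]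
  simp

theorem expKernel_neg_of_nonneg {t : ℝ} (ht : 0 ≤ t) :
    expKernel (-t) = ENNReal.ofReal (t + 1 / 2) * ENNReal.ofReal (exp (-t)) := by
  have hnear : ∫⁻ x in Ioc 0 t, ENNReal.ofReal (exp (-x)) * ENNReal.ofReal (exp (-|x + -t|)) =
      ENNReal.ofReal t * ENNReal.ofReal (exp (-t)) := by
    have hexp : ∀ x ∈ Ioc 0 t, ENNReal.ofReal (exp (-x)) * ENNReal.ofReal (exp (-|x + -t|)) =
        ENNReal.ofReal (exp (-t)) := fun x hx => by
      rw [abs_of_nonpos (by linarith [hx.2]), ← ENNReal.ofReal_mul (exp_nonneg _), ← exp_add]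
      ring_nf
    rw [setLIntegral_congr_fun measurableSet_Ioc hexp, setLIntegral_const, volume_Ioc, sub_zero,
      mul_comm]
  have hfar : ∫⁻ x in Ioi t, ENNReal.ofReal (exp (-x)) * ENNReal.ofReal (exp (-|x + -t|)) =
      ENNReal.ofReal (1 / 2) * ENNReal.ofReal (exp (-t)) := by
    rw [← setLIntegral_Ioi_zero_comp_add_right, ← expKernel_of_nonneg ht, expKernel]
    refine setLIntegral_congr_fun measurableSet_Ioi fun x (hx : 0 < x) => ?_
    rw [add_neg_cancel_right, abs_of_pos hx, abs_of_nonneg (by linarith), mul_comm]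
  rw [expKernel, ← Ioc_union_Ioi_eq_Ioi ht, lintegral_union measurableSet_Ioi
    (Ioc_disjoint_Ioi le_rfl), hnear, hfar, ← add_mul, ENNReal.ofReal_add ht (by norm_num)]

theorem lintegral_rpow_mul_expKernel (ha : 0 < a) :
    ∫⁻ w in Ioi 0, ENNReal.ofReal (w ^ (a - 1)) * expKernel w =
      ENNReal.ofReal (1 / 2 * Gamma a) := by
  have hkernel : ∀ w ∈ Ioi (0 : ℝ), ENNReal.ofReal (w ^ (a - 1)) * expKernel w =
      ENNReal.ofReal (1 / 2) * (ENNReal.ofReal (w ^ (a - 1)) * ENNReal.ofReal (exp (-w))) :=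
    fun w hw => by rw [expKernel_of_nonneg (mem_Ioi.1 hw).le, mul_left_comm]
  rw [setLIntegral_congr_fun measurableSet_Ioi hkernel, lintegral_const_mul _ (by fun_prop),
    lintegral_rpow_mul_exp_neg_Ioi ha, ← ENNReal.ofReal_mul (by norm_num)]

theorem lintegral_rpow_mul_expKernel_neg (ha : 0 < a) :
    ∫⁻ w in Ioi 0, ENNReal.ofReal (w ^ (a - 1)) * expKernel (-w) =
      ENNReal.ofReal ((a + 1 / 2) * Gamma a) := by
  have hkernel : ∀ w ∈ Ioi (0 : ℝ), ENNReal.ofReal (w ^ (a - 1)) * expKernel (-w) =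
      ENNReal.ofReal (w ^ ((a + 1) - 1)) * ENNReal.ofReal (exp (-w)) +
        ENNReal.ofReal (1 / 2) * (ENNReal.ofReal (w ^ (a - 1)) * ENNReal.ofReal (exp (-w))) :=
    fun w (hw : 0 < w) => by
      rw [expKernel_neg_of_nonneg hw.le, ENNReal.ofReal_add hw.le (by norm_num),
        add_sub_right_comm, rpow_add_one hw.ne', ENNReal.ofReal_mul (by positivity)]
      ring
  rw [setLIntegral_congr_fun measurableSet_Ioi hkernel, lintegral_add_left (by fun_prop),
    lintegral_const_mul _ (by fun_prop), lintegral_rpow_mul_exp_neg_Ioi ha,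
    lintegral_rpow_mul_exp_neg_Ioi (by linarith), Gamma_add_one ha.ne',
    ← ENNReal.ofReal_mul (by norm_num), add_mul,
    ENNReal.ofReal_add (by positivity) (by positivity)]

theorem lintegral_exp_neg_mul_abs_sub_mul {g k : ℝ → ℝ≥0∞} (hg : Measurable g)
    (hk : Measurable k) :
    ∫⁻ x in Ioi 0, ∫⁻ y in Ioi 0, ENNReal.ofReal (exp (-x)) * g |x - y| * k y =
      (∫⁻ w in Ioi 0, g w * ∫⁻ x in Ioi 0, ENNReal.ofReal (exp (-x)) * k (x + w)) +
        (∫⁻ w in Ioi 0, g w * ENNReal.ofReal (exp (-w))) *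
          ∫⁻ y in Ioi 0, ENNReal.ofReal (exp (-y)) * k y := by
  rw [lintegral_Ioi_Ioi_eq_add_diagonal (by fun_prop)]
  congr 1
  · refine setLIntegral_congr_fun measurableSet_Ioi fun w (hw : 0 < w) => ?_
    simp_rw [sub_add_cancel_left, abs_neg, abs_of_pos hw]
    rw [← lintegral_const_mul _ (by fun_prop)]
    congr 1 with x
    ring
  · rw [← lintegral_mul_const _ (by fun_prop)]
    refine setLIntegral_congr_fun measurableSet_Ioi fun w (hw : 0 < w) => ?_
    simp_rw [add_sub_cancel_left, abs_of_pos hw, neg_add, exp_add,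
      ENNReal.ofReal_mul (exp_nonneg _)]
    rw [← lintegral_const_mul _ (by fun_prop)]
    congr 1 with y
    ring

theorem lintegral_exp_neg_mul_lintegral_mul_exp_neg_abs {f : ℝ → ℝ≥0∞} (hf : Measurable f)
    (w : ℝ) :
    ∫⁻ x in Ioi 0, ENNReal.ofReal (exp (-x)) *
        ∫⁻ z in Ioi 0, f z * ENNReal.ofReal (exp (-|x + w - z|)) =
      ∫⁻ z in Ioi 0, f z * expKernel (w - z) := by
  have hpull (x : ℝ) : ENNReal.ofReal (exp (-x)) *
      ∫⁻ z in Ioi 0, f z * ENNReal.ofReal (exp (-|x + w - z|)) =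
      ∫⁻ z in Ioi 0, f z *
        (ENNReal.ofReal (exp (-x)) * ENNReal.ofReal (exp (-|x + (w - z)|))) := by
    rw [← lintegral_const_mul _ (by fun_prop)]
    simp_rw [mul_left_comm, add_sub_assoc]
  simp_rw [hpull]
  rw [lintegral_lintegral_swap (by fun_prop)]
  congr 1 with z
  rw [lintegral_const_mul _ (by fun_prop), expKernel]

theorem lintegral_octant_eq_lintegral_expKernel {f g : ℝ → ℝ≥0∞} (hf : Measurable f)
    (hg : Measurable g) :
    ∫⁻ x in Ioi 0, ∫⁻ y in Ioi 0, ENNReal.ofReal (exp (-x)) * g |x - y| *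
        ∫⁻ z in Ioi 0, f z * ENNReal.ofReal (exp (-|y - z|)) =
      (∫⁻ w in Ioi 0, g w * ∫⁻ z in Ioi 0, f z * expKernel (w - z)) +
        (∫⁻ w in Ioi 0, g w * ENNReal.ofReal (exp (-w))) *
          ∫⁻ z in Ioi 0, f z * expKernel (-z) := by
  have hboundary := lintegral_exp_neg_mul_lintegral_mul_exp_neg_abs hf 0
  simp only [add_zero, zero_sub] at hboundary
  rw [lintegral_exp_neg_mul_abs_sub_mul hg (by fun_prop), hboundary]
  simp_rw [lintegral_exp_neg_mul_lintegral_mul_exp_neg_abs hf]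

theorem lintegral_rpow_mul_lintegral_rpow_mul_expKernel_sub
    (ha : 0 < a) (hb : 0 < b) (hab : a + b < 1) :
    ∫⁻ w in Ioi 0, ENNReal.ofReal (w ^ (b - 1)) *
        ∫⁻ z in Ioi 0, ENNReal.ofReal (z ^ (a - 1)) * expKernel (w - z) =
      ENNReal.ofReal (beta a (1 - a - b) * (1 / 2 * Gamma (a + b)) +
        beta b (1 - a - b) * ((a + b + 1 / 2) * Gamma (a + b))) := by
  have hs : 0 < a + b := add_pos ha hb
  have hβa : 0 < beta a (1 - a - b) := beta_pos ha (by linarith)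
  have hβb : 0 < beta b (1 - a - b) := beta_pos hb (by linarith)
  rw [ENNReal.ofReal_add (by positivity) (by positivity), ENNReal.ofReal_mul hβa.le,
    ENNReal.ofReal_mul hβb.le, ← lintegral_rpow_mul_expKernel hs,
    ← lintegral_rpow_mul_expKernel_neg hs,
    ← lintegral_rpow_mul_rpow_mul_sub measurable_expKernel ha hb hab,
    lintegral_lintegral_swap (by fun_prop)]
  congr 1 with w
  rw [← lintegral_const_mul _ (by fun_prop)]
  congr 1 with z
  ring

theorem lintegral_octant_rpow (ha : 0 < a) (hb : 0 < b) (hab : a + b < 1) :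
    ∫⁻ x in Ioi 0, ∫⁻ y in Ioi 0,
        ENNReal.ofReal (exp (-x)) * ENNReal.ofReal (|x - y| ^ (b - 1)) *
          ∫⁻ z in Ioi 0, ENNReal.ofReal (z ^ (a - 1)) * ENNReal.ofReal (exp (-|y - z|)) =
      ENNReal.ofReal (beta a (1 - a - b) * (1 / 2 * Gamma (a + b)) +
        beta b (1 - a - b) * ((a + b + 1 / 2) * Gamma (a + b)) +
        Gamma b * ((a + 1 / 2) * Gamma a)) := by
  have hΓb := Gamma_pos_of_pos hb
  have hβa : 0 < beta a (1 - a - b) := beta_pos ha (by linarith)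
  have hβb : 0 < beta b (1 - a - b) := beta_pos hb (by linarith)
  rw [lintegral_octant_eq_lintegral_expKernel (f := fun z => ENNReal.ofReal (z ^ (a - 1)))
      (g := fun w => ENNReal.ofReal (w ^ (b - 1))) (by fun_prop) (by fun_prop),
    lintegral_rpow_mul_lintegral_rpow_mul_expKernel_sub ha hb hab,
    lintegral_rpow_mul_exp_neg_Ioi hb, lintegral_rpow_mul_expKernel_neg ha,
    ← ENNReal.ofReal_mul hΓb.le, ← ENNReal.ofReal_add (by positivity) (by positivity)]

theorem setIntegral_octant_eq_toReal_lintegral {f g : ℝ → ℝ} (hf : Measurable f)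
    (hg : Measurable g) (hf0 : ∀ z, 0 ≤ z → 0 ≤ f z) (hg0 : ∀ t, 0 ≤ t → 0 ≤ g t) :
    (∫ p in (Ici (0:ℝ)) ×ˢ (Ici (0:ℝ)) ×ˢ (Ici (0:ℝ)),
      exp (-p.1 - |p.2.1 - p.2.2|) * f p.2.2 * g |p.1 - p.2.1|) =
    (∫⁻ x in Ioi 0, ∫⁻ y in Ioi 0, ENNReal.ofReal (exp (-x)) * ENNReal.ofReal (g |x - y|) *
      ∫⁻ z in Ioi 0, ENNReal.ofReal (f z) * ENNReal.ofReal (exp (-|y - z|))).toReal := by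
  rw [integral_eq_lintegral_of_nonneg_ae]
  · simp only [Measure.volume_eq_prod, ← Measure.prod_restrict, ← restrict_Ioi_eq_restrict_Ici]
    rw [lintegral_prod _ (by fun_prop)]
    congr 2 with x
    rw [lintegral_prod _ (by fun_prop)]
    congr 1 with y
    rw [← lintegral_const_mul _ (by fun_prop)]
    congr 1 with z
    rw [ENNReal.ofReal_mul' (hg0 _ (abs_nonneg _)), ENNReal.ofReal_mul (exp_nonneg _),
      sub_eq_add_neg, exp_add, ENNReal.ofReal_mul (exp_nonneg _)]
    ring
  · filter_upwards [ae_restrict_mem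
      (measurableSet_Ici.prod (measurableSet_Ici.prod measurableSet_Ici))] with p hp
    exact mul_nonneg (mul_nonneg (exp_nonneg _) (hf0 _ hp.2.2)) (hg0 _ (abs_nonneg _))
  · exact Measurable.aestronglyMeasurable (by fun_prop)

end

theorem stmt_5_general {a b : ℝ} (ha : 0 < a) (hb : 0 < b) (hab : a + b < 1) :
    (∫ p in (Ici (0:ℝ)) ×ˢ (Ici (0:ℝ)) ×ˢ (Ici (0:ℝ)),
      exp (-p.1 - |p.2.1 - p.2.2|) * p.2.2 ^ (a - 1) * |p.1 - p.2.1| ^ (b - 1)) =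
      (a + 1 / 2) * Gamma a * Gamma b +
        (1 / 2 * (Gamma a / Gamma (1 - b)) + (a + b + 1 / 2) * (Gamma b / Gamma (1 - a))) *
          Gamma (1 - a - b) * Gamma (a + b) := by
  have hc : 0 < 1 - a - b := by linarith
  have hβa := beta_pos ha hc
  have hβb := beta_pos hb hc
  rw [setIntegral_octant_eq_toReal_lintegral (f := fun z => z ^ (a - 1))
      (g := fun t => t ^ (b - 1)) (by fun_prop) (by fun_prop)
      (fun _ hz => rpow_nonneg hz _) (fun _ ht => rpow_nonneg ht _),
    lintegral_octant_rpow ha hb hab, ENNReal.toReal_ofReal (by positivity), beta, beta,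
    show a + (1 - a - b) = 1 - b by ring, show b + (1 - a - b) = 1 - a by ring]
  ring

theorem stmt_5 (H : ℝ) (h1 : 1/2 < H) (h2 : H < 3/4) :
    (∫ p in (Ici (0:ℝ)) ×ˢ (Ici (0:ℝ)) ×ˢ (Ici (0:ℝ)),
      Real.exp (-p.1 - |p.2.1 - p.2.2|) *
        p.2.2 ^ (2*H - 2) * |p.1 - p.2.1| ^ (2*H - 2))
      = (2*H - 1/2) * Real.Gamma (2*H - 1) ^ 2 +
        (4*H - 1) * Real.Gamma (2*H - 1) * Real.Gamma (3 - 4*H) *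
          Real.Gamma (4*H - 2) / Real.Gamma (2 - 2*H) := by
  have h := stmt_5_general (a := 2 * H - 1) (b := 2 * H - 1) (by linarith) (by linarith)
    (by linarith)
  ring_nf at h ⊢
  exact h
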